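/- Let m ≥ 2, let U ⊆ ℝ^m be an open box (a product of open intervals), and let h : U → ℝ be smooth and positive. Then the following are equivalent: (a) ∂²(log h)/∂x_i∂x_j ≡ 0 on U for all pairs i ≠ j; (b) for every closed box K = ∏_{k=1}^m [a_k,b_k] ⊆ U and every k ∈ {1,…,m} there exist p_1 ∈ (a_1,b_1), …, p_k ∈ (a_k,b_k) such that all 2^k subboxes of the form ∏_{l=1}^k I_l × ∏_{l=k+1}^m [a_l,b_l], where each I_l is either [a_l,p_l] or [p_l,b_l], have equal integrals of h. -/

import Mathlib

open MeasureTheory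

noncomputable section

/-- Second mixed partial derivative `∂²(log h)/∂x_i∂x_j` at `x`. -/
def logpd2 {m : ℕ} (h : (Fin m → ℝ) → ℝ) (k l : Fin m) (x : Fin m → ℝ) : ℝ :=
  fderiv ℝ (fun y => fderiv ℝ (fun z => Real.log (h z)) y (Pi.single k (1:ℝ)))
    x (Pi.single l 1)

/-- The `h`-volume of the subbox of `K = ∏_l [a_l,b_l]` in which, for each of the first
`k` coordinates `l`, the factor `[a_l,b_l]` is replaced by `[p_l,b_l]` (if `ε l = true`)
or by `[a_l,p_l]` (if `ε l = false`). -/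
def splitVol {m : ℕ} (h : (Fin m → ℝ) → ℝ) (a b p : Fin m → ℝ) (k : ℕ)
    (ε : Fin m → Bool) : ℝ :=
  ∫ x in Set.Icc
      (fun l : Fin m => if l.val < k ∧ ε l then p l else a l)
      (fun l : Fin m => if l.val < k ∧ ¬ ε l then p l else b l),
    h x

/-! ### Boxes -/

/-- Splitting a box by a hyperplane. -/
lemma box_split {m : ℕ} {h : (Fin m → ℝ) → ℝ} {a b : Fin m → ℝ} (l : Fin m) {p : ℝ}
    (hc : ContinuousOn h (Set.Icc a b)) (h1 : a l ≤ p) (h2 : p ≤ b l) :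
    ∫ x in Set.Icc a b, h x = (∫ x in Set.Icc a (Function.update b l p), h x)
      + ∫ x in Set.Icc (Function.update a l p) b, h x := by
  have hint : IntegrableOn h (Set.Icc a b) := hc.integrableOn_compact isCompact_Icc
  have hU : Set.Icc a b = Set.Icc a (Function.update b l p) ∪ Set.Icc (Function.update a l p) b := by
    ext x
    simp only [Set.mem_Icc, Set.mem_union, le_update_iff, update_le_iff]
    constructor
    · rintro ⟨hx1, hx2⟩
      rcases le_total (x l) p with hx | hx
      · exact Or.inl ⟨hx1, hx, fun j _ => hx2 j⟩
      · exact Or.inr ⟨⟨hx, fun j _ => hx1 j⟩, hx2⟩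
    · rintro (⟨hx1, hx, hx2⟩ | ⟨⟨hx, hx1⟩, hx2⟩)
      · refine ⟨hx1, fun j => ?_⟩
        by_cases hj : j = l
        · subst hj; exact hx.trans h2
        · exact hx2 j hj
      · refine ⟨fun j => ?_, hx2⟩
        by_cases hj : j = l
        · subst hj; exact h1.trans hx
        · exact hx1 j hj
  have hi1 := hint.mono_set (hU ▸ Set.subset_union_left)
  have hi2 := hint.mono_set (hU ▸ Set.subset_union_right)
  rw [hU]
  refine setIntegral_union₀ ?_ measurableSet_Icc.nullMeasurableSet hi1 hi2
  refine measure_mono_null ?_ (Measure.pi_hyperplane (fun _ : Fin m => (volume : Measure ℝ)) l p)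
  rintro x ⟨hx1, hx2⟩
  have e1 := hx1.2 l
  have e2 := hx2.1 l
  simp only [Function.update_self] at e1 e2
  exact le_antisymm e1 e2

lemma box_bounds {m : ℕ} {h : (Fin m → ℝ) → ℝ} {a b : Fin m → ℝ} {c C : ℝ} (hab : a ≤ b)
    (hc : ContinuousOn h (Set.Icc a b)) (h1 : ∀ x ∈ Set.Icc a b, c ≤ h x)
    (h2 : ∀ x ∈ Set.Icc a b, h x ≤ C) :
    c * ∏ l, (b l - a l) ≤ ∫ x in Set.Icc a b, h x ∧
      ∫ x in Set.Icc a b, h x ≤ C * ∏ l, (b l - a l) := by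
  have hint : IntegrableOn h (Set.Icc a b) := hc.integrableOn_compact isCompact_Icc
  have hk : ∀ k : ℝ, IntegrableOn (fun _ : Fin m → ℝ => k) (Set.Icc a b) := fun k =>
    continuousOn_const.integrableOn_compact isCompact_Icc
  have hv : ∀ k : ℝ, ∫ _ in Set.Icc a b, k = k * ∏ l, (b l - a l) := by
    intro k
    rw [setIntegral_const, Measure.real, Real.volume_Icc_pi_toReal hab, smul_eq_mul, mul_comm]
  constructor
  · rw [← hv]; exact setIntegral_mono_on (hk c) hint measurableSet_Icc h1
  · rw [← hv]; exact setIntegral_mono_on hint (hk C) measurableSet_Icc h2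

/-- box with coordinates in `S` split. -/
def boxVol {m : ℕ} (h : (Fin m → ℝ) → ℝ) (a b p : Fin m → ℝ) (S : Finset (Fin m))
    (ε : Fin m → Bool) : ℝ :=
  ∫ x in Set.Icc
      (fun l : Fin m => if l ∈ S ∧ ε l then p l else a l)
      (fun l : Fin m => if l ∈ S ∧ ¬ ε l then p l else b l), h x

lemma boxVol_merge {m : ℕ} {h : (Fin m → ℝ) → ℝ} {a b p : Fin m → ℝ}
    (hc : ContinuousOn h (Set.Icc a b)) (hp : ∀ l, p l ∈ Set.Ioo (a l) (b l))
    (hu : ∀ ε ε', boxVol h a b p Finset.univ ε = boxVol h a b p Finset.univ ε') (T : Finset (Fin m)) :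
    ∀ ε ε', boxVol h a b p Tᶜ ε = boxVol h a b p Tᶜ ε' := by
  induction T using Finset.induction_on with
  | empty => simpa using hu
  | insert l T hl ih =>
    have key : ∀ ε, boxVol h a b p (insert l T)ᶜ ε =
        boxVol h a b p Tᶜ (Function.update ε l false) + boxVol h a b p Tᶜ (Function.update ε l true) := by
      intro ε
      unfold boxVol
      rw [box_split l (p := p l)]
      · congr 3
        · congr 1
          · funext j
            by_cases hj : j = l
            · subst hj; simp
            · simp [hj]
          · funext j
            by_cases hj : j = l
            · subst hj; simp [hl]
            · simp [hj]
        · congr 1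
          · funext j
            by_cases hj : j = l
            · subst hj; simp [hl]
            · simp [hj]
          · funext j
            by_cases hj : j = l
            · subst hj; simp
            · simp [hj]
      · refine hc.mono (Set.Icc_subset_Icc ?_ ?_)
        · intro j; dsimp only; split_ifs; exacts [(hp j).1.le, le_rfl]
        · intro j; dsimp only; split_ifs; exacts [(hp j).2.le, le_rfl]
      · simp [(hp l).1.le]
      · simp [(hp l).2.le]
    intro ε δ
    rw [key, key, ih _ (Function.update δ l false), ih (Function.update ε l true) (Function.update δ l true)]

/-- The quadrisection property in the coordinates `i`, `j`. -/
def Quad {m : ℕ} (h : (Fin m → ℝ) → ℝ) (i j : Fin m) (a b : Fin m → ℝ) : Prop :=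
  ∃ p q : ℝ, p ∈ Set.Ioo (a i) (b i) ∧ q ∈ Set.Ioo (a j) (b j) ∧
    (∫ x in Set.Icc a (Function.update b i p), h x = ∫ x in Set.Icc (Function.update a i p) b, h x) ∧
    (∫ x in Set.Icc a (Function.update b j q), h x = ∫ x in Set.Icc (Function.update a j q) b, h x) ∧
    (∫ x in Set.Icc a (Function.update (Function.update b j q) i p), h x
      = ∫ x in Set.Icc (Function.update a i p) (Function.update b j q), h x) ∧
    (∫ x in Set.Icc (Function.update a j q) (Function.update b i p), h x
      = ∫ x in Set.Icc (Function.update (Function.update a j q) i p) b, h x)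

lemma quad_of_split {m : ℕ} {h : (Fin m → ℝ) → ℝ} {a b p : Fin m → ℝ} {i j : Fin m} (hij : i ≠ j)
    (hc : ContinuousOn h (Set.Icc a b)) (hp : ∀ l, p l ∈ Set.Ioo (a l) (b l))
    (hs : ∀ ε ε' : Fin m → Bool, splitVol h a b p m ε = splitVol h a b p m ε') :
    Quad h i j a b := by
  have hu : ∀ ε ε', boxVol h a b p Finset.univ ε = boxVol h a b p Finset.univ ε' := by
    intro ε ε'
    have := hs ε ε'
    simpa [splitVol, boxVol] using this
  have hm : ∀ S ε ε', boxVol h a b p S ε = boxVol h a b p S ε' := by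
    intro S
    have := boxVol_merge hc hp hu Sᶜ
    simpa using this
  refine ⟨p i, p j, hp i, hp j, ?_, ?_, ?_, ?_⟩
  · convert hm {i} (fun _ => false) (fun _ => true) using 1 <;> unfold boxVol <;> congr 3 <;> funext l <;>
      by_cases h1 : l = i <;> (try subst h1) <;> simp_all
  · convert hm {j} (fun _ => false) (fun _ => true) using 1 <;> unfold boxVol <;> congr 3 <;> funext l <;>
      by_cases h1 : l = j <;> (try subst h1) <;> simp_all
  · convert hm {i, j} (fun _ => false) (fun l => decide (l = i)) using 1 <;> unfold boxVol <;> congr 3 <;> funext l <;>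
      by_cases h1 : l = i <;> (try subst h1) <;> by_cases h2 : l = j <;> (try subst h2) <;> simp_all
  · convert hm {i, j} (fun l => decide (l = j)) (fun _ => true) using 1 <;> unfold boxVol <;> congr 3 <;> funext l <;>
      by_cases h1 : l = i <;> (try subst h1) <;> by_cases h2 : l = j <;> (try subst h2) <;> simp_all

/-- Balanced at `p` in direction `i`. -/
def Bal {m : ℕ} (h : (Fin m → ℝ) → ℝ) (i : Fin m) (p : ℝ) (a b : Fin m → ℝ) : Prop :=
  ∫ x in Set.Icc a (Function.update b i p), h x = ∫ x in Set.Icc (Function.update a i p) b, h x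

lemma bal_not_lt {m : ℕ} {h : (Fin m → ℝ) → ℝ} {i : Fin m} {a b : Fin m → ℝ} {c C p p' : ℝ}
    (hab : ∀ l, a l < b l) (hc : ContinuousOn h (Set.Icc a b)) (hc0 : 0 < c)
    (h1 : ∀ x ∈ Set.Icc a b, c ≤ h x) (h2 : ∀ x ∈ Set.Icc a b, h x ≤ C)
    (hp : p ∈ Set.Ioo (a i) (b i)) (hp' : p' ∈ Set.Ioo (a i) (b i))
    (hb : Bal h i p a b) (hb' : Bal h i p' a b) : ¬ p < p' := by
  intro hlt
  have s1 : Set.Icc a (Function.update b i p') ⊆ Set.Icc a b :=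
    Set.Icc_subset_Icc le_rfl (update_le_iff.2 ⟨hp'.2.le, fun _ _ => le_rfl⟩)
  have s2 : Set.Icc (Function.update a i p) b ⊆ Set.Icc a b :=
    Set.Icc_subset_Icc (le_update_iff.2 ⟨hp.1.le, fun _ _ => le_rfl⟩) le_rfl
  have s3 : Set.Icc (Function.update a i p) (Function.update b i p') ⊆ Set.Icc a b :=
    Set.Icc_subset_Icc (le_update_iff.2 ⟨hp.1.le, fun _ _ => le_rfl⟩)
      (update_le_iff.2 ⟨hp'.2.le, fun _ _ => le_rfl⟩)
  have e1 := box_split i (p := p) (hc.mono s1) hp.1.le (by simpa using hlt.le)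
  have e2 := box_split i (p := p') (hc.mono s2) (by simpa using hlt.le) hp'.2.le
  simp only [Function.update_idem] at e1 e2
  have hlt' : ∀ l, Function.update a i p l < Function.update b i p' l := by
    intro l
    by_cases hl : l = i
    · subst hl; simpa using hlt
    · simpa [hl] using hab l
  have e3 := (box_bounds (c := c) (C := C) (fun l => (hlt' l).le) (hc.mono s3) (fun x hx => h1 x (s3 hx))
    (fun x hx => h2 x (s3 hx))).1
  have e4 : 0 < c * ∏ l, (Function.update b i p' l - Function.update a i p l) :=
    mul_pos hc0 (Finset.prod_pos fun l _ => sub_pos.2 (hlt' l))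
  unfold Bal at hb hb'
  linarith

lemma bal_unique {m : ℕ} {h : (Fin m → ℝ) → ℝ} {i : Fin m} {a b : Fin m → ℝ} {c C p p' : ℝ}
    (hab : ∀ l, a l < b l) (hc : ContinuousOn h (Set.Icc a b)) (hc0 : 0 < c)
    (h1 : ∀ x ∈ Set.Icc a b, c ≤ h x) (h2 : ∀ x ∈ Set.Icc a b, h x ≤ C)
    (hp : p ∈ Set.Ioo (a i) (b i)) (hp' : p' ∈ Set.Ioo (a i) (b i))
    (hb : Bal h i p a b) (hb' : Bal h i p' a b) : p = p' :=
  le_antisymm (not_lt.1 (bal_not_lt hab hc hc0 h1 h2 hp' hp hb' hb))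
    (not_lt.1 (bal_not_lt hab hc hc0 h1 h2 hp hp' hb hb'))

lemma bal_ratio {m : ℕ} {h : (Fin m → ℝ) → ℝ} {j : Fin m} {a b : Fin m → ℝ} {c C q : ℝ}
    (hab : ∀ l, a l < b l) (hc : ContinuousOn h (Set.Icc a b))
    (h1 : ∀ x ∈ Set.Icc a b, c ≤ h x) (h2 : ∀ x ∈ Set.Icc a b, h x ≤ C)
    (hq : q ∈ Set.Ioo (a j) (b j)) (hb : Bal h j q a b) :
    c * (q - a j) ≤ C * (b j - q) ∧ c * (b j - q) ≤ C * (q - a j) := by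
  have s1 : Set.Icc a (Function.update b j q) ⊆ Set.Icc a b :=
    Set.Icc_subset_Icc le_rfl (update_le_iff.2 ⟨hq.2.le, fun _ _ => le_rfl⟩)
  have s2 : Set.Icc (Function.update a j q) b ⊆ Set.Icc a b :=
    Set.Icc_subset_Icc (le_update_iff.2 ⟨hq.1.le, fun _ _ => le_rfl⟩) le_rfl
  have b1 := box_bounds (c := c) (C := C) (le_update_iff.2 ⟨hq.1.le, fun l _ => (hab l).le⟩) (hc.mono s1)
    (fun x hx => h1 x (s1 hx)) (fun x hx => h2 x (s1 hx))
  have b2 := box_bounds (c := c) (C := C) (update_le_iff.2 ⟨hq.2.le, fun l _ => (hab l).le⟩) (hc.mono s2)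
    (fun x hx => h1 x (s2 hx)) (fun x hx => h2 x (s2 hx))
  set P := ∏ l ∈ Finset.univ \ {j}, (b l - a l) with hP
  have hP0 : 0 < P := Finset.prod_pos fun l _ => sub_pos.2 (hab l)
  have e1 : ∏ l, (Function.update b j q l - a l) = (q - a j) * P := by
    rw [hP, ← Finset.prod_update_of_mem (Finset.mem_univ j)]
    refine Finset.prod_congr rfl fun l _ => ?_
    by_cases hl : l = j
    · subst hl; simp
    · simp [hl]
  have e2 : ∏ l, (b l - Function.update a j q l) = (b j - q) * P := by
    rw [hP, ← Finset.prod_update_of_mem (Finset.mem_univ j)]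
    refine Finset.prod_congr rfl fun l _ => ?_
    by_cases hl : l = j
    · subst hl; simp
    · simp [hl]
  rw [e1] at b1
  rw [e2] at b2
  unfold Bal at hb
  constructor
  · refine le_of_mul_le_mul_right ?_ hP0
    linarith [b1.1, b2.2]
  · refine le_of_mul_le_mul_right ?_ hP0
    linarith [b2.1, b1.2]

/-- Iterated bisection in direction `j`, keeping the balance point in direction `i`. -/
lemma shrink {m : ℕ} {h : (Fin m → ℝ) → ℝ} {i j : Fin m} (hij : i ≠ j) {A B : Fin m → ℝ} {c C p : ℝ}
    (hAB : ∀ l, A l < B l) (hc : ContinuousOn h (Set.Icc A B)) (hc0 : 0 < c) (hC0 : 0 < C)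
    (h1 : ∀ x ∈ Set.Icc A B, c ≤ h x) (h2 : ∀ x ∈ Set.Icc A B, h x ≤ C)
    (hq : ∀ a b : Fin m → ℝ, (∀ l, a l < b l) → Set.Icc a b ⊆ Set.Icc A B → Quad h i j a b)
    (hp : p ∈ Set.Ioo (A i) (B i)) (hb : Bal h i p A B) (y : ℝ) (hy : y ∈ Set.Icc (A j) (B j)) (n : ℕ) :
    ∃ s t : ℝ, A j ≤ s ∧ s ≤ y ∧ y ≤ t ∧ t ≤ B j ∧ s < t ∧ t - s ≤ (C / (c + C)) ^ n * (B j - A j) ∧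
      Bal h i p (Function.update A j s) (Function.update B j t) := by
  induction n with
  | zero => exact ⟨A j, B j, le_rfl, hy.1, hy.2, le_rfl, hAB j, by simp, by simpa using hb⟩
  | succ n ih =>
    obtain ⟨s, t, hs, hsy, hyt, ht, hst, hlen, hbal⟩ := ih
    set a := Function.update A j s with ha
    set b := Function.update B j t with hbdef
    have hab : ∀ l, a l < b l := by
      intro l
      by_cases hl : l = j
      · subst hl; simpa [ha, hbdef] using hst
      · simpa [hl, ha, hbdef] using hAB l
    have hsub : Set.Icc a b ⊆ Set.Icc A B :=
      Set.Icc_subset_Icc (le_update_iff.2 ⟨hs, fun _ _ => le_rfl⟩) (update_le_iff.2 ⟨ht, fun _ _ => le_rfl⟩)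
    obtain ⟨p', q, hp', hq', g1, g2, g3, g4⟩ := hq a b hab hsub
    have hai : a i = A i := by simp [ha, hij]
    have hbi : b i = B i := by simp [hbdef, hij]
    have haj : a j = s := by simp [ha]
    have hbj : b j = t := by simp [hbdef]
    have hpp : p' = p := bal_unique hab (hc.mono hsub) hc0 (fun x hx => h1 x (hsub hx))
      (fun x hx => h2 x (hsub hx)) hp' (by rw [hai, hbi]; exact hp) g1 hbal
    subst hpp
    obtain ⟨r1, r2⟩ := bal_ratio hab (hc.mono hsub) (fun x hx => h1 x (hsub hx))
      (fun x hx => h2 x (hsub hx)) hq' g2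
    rw [haj, hbj] at r1 r2 hq'
    have hcC : 0 < c + C := by linarith
    have hbound : ∀ w, c * w ≤ C * (t - s - w) → w ≤ (C / (c + C)) ^ (n + 1) * (B j - A j) := by
      intro w hw
      have : w ≤ C / (c + C) * (t - s) := by
        rw [div_mul_eq_mul_div, le_div_iff₀ hcC]; nlinarith
      calc w ≤ C / (c + C) * (t - s) := this
        _ ≤ C / (c + C) * ((C / (c + C)) ^ n * (B j - A j)) := by gcongr
        _ = _ := by ring
    rcases le_total y q with hyq | hyq
    · refine ⟨s, q, hs, hsy, hyq, hq'.2.le.trans ht, hq'.1, hbound _ (by linarith), ?_⟩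
      have : Function.update B j q = Function.update b j q := by simp [hbdef]
      rw [this]
      exact g3
    · refine ⟨q, t, hs.trans hq'.1.le, hyq, hyt, ht, hq'.2, hbound _ (by linarith), ?_⟩
      have : Function.update A j q = Function.update a j q := by simp [ha]
      rw [this]
      exact g4

/-! ### Fibers -/

lemma fiber_anti {f : ℝ → ℝ} {a b p α : ℝ} (hp : p ∈ Set.Ioo a b) (hc : ContinuousOn f (Set.Icc a b))
    (hf : ∀ x ∈ Set.Icc a b, 0 < f x)
    (hm : StrictAntiOn (fun x => Real.log (f x) - α * x) (Set.Icc a b))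
    (hW : ∫ x in p..b, Real.exp (α * x) ≤ ∫ x in a..p, Real.exp (α * x)) :
    ∫ x in p..b, f x < ∫ x in a..p, f x := by
  set k := Real.exp (Real.log (f p) - α * p) with hk
  have hpI : p ∈ Set.Icc a b := ⟨hp.1.le, hp.2.le⟩
  have e : ∀ x ∈ Set.Icc a b, f x = Real.exp (Real.log (f x) - α * x) * Real.exp (α * x) := by
    intro x hx
    rw [← Real.exp_add, sub_add_cancel, Real.exp_log (hf x hx)]
  have s1 : Set.Icc a p ⊆ Set.Icc a b := Set.Icc_subset_Icc le_rfl hp.2.le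
  have s2 : Set.Icc p b ⊆ Set.Icc a b := Set.Icc_subset_Icc hp.1.le le_rfl
  have hcont : ∀ s, ContinuousOn (fun x => k * Real.exp (α * x)) s := fun s => by fun_prop
  have i1 : ∫ x in a..p, k * Real.exp (α * x) < ∫ x in a..p, f x := by
    refine intervalIntegral.integral_lt_integral_of_continuousOn_of_le_of_exists_lt hp.1 (hcont _)
      (hc.mono s1) ?_ ⟨a, ⟨le_rfl, hp.1.le⟩, ?_⟩
    · intro x hx
      have hx' := s1 ⟨hx.1.le, hx.2⟩
      rw [e x hx']
      gcongr
      exact Real.exp_le_exp.2 (hm.antitoneOn hx' hpI hx.2)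
    · have hx' : a ∈ Set.Icc a b := s1 ⟨le_rfl, hp.1.le⟩
      rw [e a hx']
      gcongr
      exact Real.exp_lt_exp.2 (hm hx' hpI hp.1)
  have i2 : ∫ x in p..b, f x ≤ ∫ x in p..b, k * Real.exp (α * x) := by
    refine intervalIntegral.integral_mono_on hp.2.le
      ((hc.mono s2).intervalIntegrable_of_Icc hp.2.le)
      ((hcont _).intervalIntegrable_of_Icc hp.2.le) ?_
    intro x hx
    have hx' := s2 hx
    rw [e x hx']
    gcongr
    exact Real.exp_le_exp.2 (hm.antitoneOn hpI hx' hx.1)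
  rw [intervalIntegral.integral_const_mul] at i1 i2
  have hk0 : 0 < k := Real.exp_pos _
  nlinarith

lemma fiber_mono {f : ℝ → ℝ} {a b p α : ℝ} (hp : p ∈ Set.Ioo a b) (hc : ContinuousOn f (Set.Icc a b))
    (hf : ∀ x ∈ Set.Icc a b, 0 < f x)
    (hm : StrictMonoOn (fun x => Real.log (f x) - α * x) (Set.Icc a b))
    (hW : ∫ x in a..p, Real.exp (α * x) ≤ ∫ x in p..b, Real.exp (α * x)) :
    ∫ x in a..p, f x < ∫ x in p..b, f x := by
  have hp' : -p ∈ Set.Ioo (-b) (-a) := ⟨neg_lt_neg hp.2, neg_lt_neg hp.1⟩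
  have hneg : ∀ x ∈ Set.Icc (-b) (-a), -x ∈ Set.Icc a b := fun x hx =>
    ⟨by linarith [hx.2], by linarith [hx.1]⟩
  have := fiber_anti (f := fun x => f (-x)) (α := -α) hp' (hc.comp (by fun_prop) hneg)
    (fun x hx => hf _ (hneg x hx)) (by
      intro x hx y hy hxy
      have := hm (hneg y hy) (hneg x hx) (neg_lt_neg hxy)
      simp only at this ⊢
      linarith)
    (by
      have e1 := intervalIntegral.integral_comp_neg (a := -p) (b := -a) (fun x => Real.exp (α * x))
      have e2 := intervalIntegral.integral_comp_neg (a := -b) (b := -p) (fun x => Real.exp (α * x))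
      simp only [neg_neg, mul_neg] at e1 e2
      simp only [neg_mul]
      rw [e1, e2]; exact hW)
  rw [intervalIntegral.integral_comp_neg, intervalIntegral.integral_comp_neg] at this
  simpa using this

/-- Fubini comparison of two boxes which only differ in direction `i`. -/
lemma fubini_lt {n : ℕ} {h : (Fin (n + 1) → ℝ) → ℝ} {i : Fin (n + 1)} {A B a b a' b' : Fin (n + 1) → ℝ}
    (hc : ContinuousOn h (Set.Icc A B)) (hAB : ∀ l, A l < B l)
    (hs : Set.Icc a b ⊆ Set.Icc A B) (hs' : Set.Icc a' b' ⊆ Set.Icc A B)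
    (ha : ∀ l, l ≠ i → a l = A l) (hb : ∀ l, l ≠ i → b l = B l)
    (ha' : ∀ l, l ≠ i → a' l = A l) (hb' : ∀ l, l ≠ i → b' l = B l)
    (hab : a i ≤ b i) (hab' : a' i ≤ b' i)
    (hlt : ∀ r ∈ Set.Icc (fun l => A (i.succAbove l)) (fun l => B (i.succAbove l)),
      ∫ x in (a i)..(b i), h (i.insertNth x r) < ∫ x in (a' i)..(b' i), h (i.insertNth x r)) :
    ∫ x in Set.Icc a b, h x < ∫ x in Set.Icc a' b', h x := by
  set J := Set.Icc (fun l => A (i.succAbove l)) (fun l => B (i.succAbove l)) with hJ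
  have mp := (volume_preserving_piFinSuccAbove (fun _ : Fin (n + 1) => ℝ) i).symm
  have key : ∀ a b : Fin (n + 1) → ℝ, Set.Icc a b ⊆ Set.Icc A B → (∀ l, l ≠ i → a l = A l) →
      (∀ l, l ≠ i → b l = B l) → a i ≤ b i →
      IntegrableOn (fun r => ∫ x in (a i)..(b i), h (i.insertNth x r)) J ∧
      ∫ x in Set.Icc a b, h x = ∫ r in J, ∫ x in (a i)..(b i), h (i.insertNth x r) := by
    intro a b hs ha hb hab
    have hpre : (MeasurableEquiv.piFinSuccAbove (fun _ : Fin (n + 1) => ℝ) i).symm ⁻¹' (Set.Icc a b)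
        = Set.Icc (a i) (b i) ×ˢ J := by
      ext ⟨x, r⟩
      have := Fin.insertNth_mem_Icc (i := i) (x := x) (p := r) (q₁ := a) (q₂ := b)
      have e1 : (fun j => a (i.succAbove j)) = fun j => A (i.succAbove j) := by
        funext l; exact ha _ (Fin.succAbove_ne i l)
      have e2 : (fun j => b (i.succAbove j)) = fun j => B (i.succAbove j) := by
        funext l; exact hb _ (Fin.succAbove_ne i l)
      rw [e1, e2] at this
      exact this
    have hint : IntegrableOn h (Set.Icc a b) := (hc.mono hs).integrableOn_compact isCompact_Icc
    have hint2 := (mp.integrableOn_comp_preimage (MeasurableEquiv.measurableEmbedding _)).2 hint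
    have hI := mp.setIntegral_preimage_emb (MeasurableEquiv.measurableEmbedding _) h (Set.Icc a b)
    rw [hpre] at hint2 hI
    rw [IntegrableOn, Measure.volume_eq_prod, ← Measure.prod_restrict] at hint2
    rw [Measure.volume_eq_prod, ← Measure.prod_restrict] at hI
    simp only [Function.comp_def] at hint2
    rw [integral_prod_symm _ hint2] at hI
    have hR := hint2.integral_prod_right
    have hx : ∀ r, ∫ x in Set.Icc (a i) (b i), h ((MeasurableEquiv.piFinSuccAbove (fun _ : Fin (n + 1) => ℝ) i).symm (x, r))
        = ∫ x in (a i)..(b i), h (i.insertNth x r) := by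
      intro r
      rw [intervalIntegral.integral_of_le hab, integral_Icc_eq_integral_Ioc]
      rfl
    simp only [hx] at hR hI
    exact ⟨hR, hI.symm⟩
  obtain ⟨i1, e1⟩ := key a b hs ha hb hab
  obtain ⟨i2, e2⟩ := key a' b' hs' ha' hb' hab'
  rw [e1, e2, ← sub_pos, ← integral_sub i2 i1]
  rw [setIntegral_pos_iff_support_of_nonneg_ae]
  · have : J ⊆ Function.support (fun r => (∫ x in (a' i)..(b' i), h (i.insertNth x r)) -
        ∫ x in (a i)..(b i), h (i.insertNth x r)) ∩ J := fun r hr =>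
      ⟨(sub_pos.2 (hlt r hr)).ne', hr⟩
    refine lt_of_lt_of_le ?_ (measure_mono this)
    rw [hJ, Real.volume_Icc_pi, CanonicallyOrderedAdd.prod_pos]
    intro l _
    simpa using hAB _
  · filter_upwards [ae_restrict_mem measurableSet_Icc] with r hr
    exact (sub_pos.2 (hlt r hr)).le
  · exact i2.sub i1

/-! ### Log-derivatives -/

/-- first partial of `log h` -/
def logpd {m : ℕ} (h : (Fin m → ℝ) → ℝ) (k : Fin m) (y : Fin m → ℝ) : ℝ :=
  fderiv ℝ (fun z => Real.log (h z)) y (Pi.single k (1:ℝ))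

lemma logpd2_eq {m : ℕ} (h : (Fin m → ℝ) → ℝ) (k l : Fin m) (x : Fin m → ℝ) :
    logpd2 h k l x = fderiv ℝ (logpd h k) x (Pi.single l 1) := rfl

section smooth
variable {m : ℕ} {U : Set (Fin m → ℝ)} {h : (Fin m → ℝ) → ℝ}

lemma contDiffOn_log (hsm : ContDiffOn ℝ (⊤ : ℕ∞) h U) (hpos : ∀ x ∈ U, 0 < h x) :
    ContDiffOn ℝ (⊤ : ℕ∞) (fun z => Real.log (h z)) U :=
  hsm.log fun x hx => (hpos x hx).ne'

lemma log_diffAt (hU : IsOpen U) (hsm : ContDiffOn ℝ (⊤ : ℕ∞) h U) (hpos : ∀ x ∈ U, 0 < h x)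
    {x : Fin m → ℝ} (hx : x ∈ U) : DifferentiableAt ℝ (fun z => Real.log (h z)) x :=
  ((contDiffOn_log hsm hpos).contDiffAt (hU.mem_nhds hx)).differentiableAt (by simp)

lemma logpd_contDiffOn (hU : IsOpen U) (hsm : ContDiffOn ℝ (⊤ : ℕ∞) h U) (hpos : ∀ x ∈ U, 0 < h x)
    (k : Fin m) : ContDiffOn ℝ 1 (logpd h k) U :=
  ((contDiffOn_log hsm hpos).fderiv_of_isOpen (m := 1) hU
    (by norm_cast)).clm_apply contDiffOn_const

lemma hasDerivAt_log_update (hU : IsOpen U) (hsm : ContDiffOn ℝ (⊤ : ℕ∞) h U) (hpos : ∀ x ∈ U, 0 < h x)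
    {y : Fin m → ℝ} {k : Fin m} {t : ℝ} (hy : Function.update y k t ∈ U) :
    HasDerivAt (fun s => Real.log (h (Function.update y k s))) (logpd h k (Function.update y k t)) t :=
  (log_diffAt hU hsm hpos hy).hasFDerivAt.comp_hasDerivAt t (hasDerivAt_update y k t)

end smooth

section fiberbox
variable {n : ℕ} {U : Set (Fin (n + 1) → ℝ)} {h : (Fin (n + 1) → ℝ) → ℝ} {i : Fin (n + 1)}
  {A B : Fin (n + 1) → ℝ} {p α : ℝ}

lemma ins_upd (i : Fin (n + 1)) (x : ℝ) (r : Fin n → ℝ) :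
    (i.insertNth x r : Fin (n + 1) → ℝ) = Function.update (i.insertNth 0 r : Fin (n + 1) → ℝ) i x := by
  simp

lemma fiber_deriv (hU : IsOpen U) (hsm : ContDiffOn ℝ (⊤ : ℕ∞) h U) (hpos : ∀ x ∈ U, 0 < h x)
    {r : Fin n → ℝ} {x : ℝ} (hx : i.insertNth x r ∈ U) :
    HasDerivAt (fun s => Real.log (h (i.insertNth s r)) - α * s)
      (logpd h i (i.insertNth x r) - α) x := by
  have h1 : HasDerivAt (fun s => Real.log (h (i.insertNth s r))) (logpd h i (i.insertNth x r)) x := by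
    rw [ins_upd] at hx
    have := hasDerivAt_log_update hU hsm hpos hx
    simpa only [← ins_upd] using this
  have h2 : HasDerivAt (fun s : ℝ => α * s) α x := by simpa using (hasDerivAt_id x).const_mul α
  exact h1.sub h2

lemma fiber_cont (hc : ContinuousOn h (Set.Icc A B)) {r : Fin n → ℝ}
    (hr : r ∈ Set.Icc (fun l => A (i.succAbove l)) (fun l => B (i.succAbove l))) :
    ContinuousOn (fun x => h (i.insertNth x r)) (Set.Icc (A i) (B i)) := by
  refine hc.comp (f := fun x : ℝ => (i.insertNth x r : Fin (n + 1) → ℝ)) ?_ ?_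
  · have e : (fun x : ℝ => (i.insertNth x r : Fin (n + 1) → ℝ)) =
        fun x => Function.update (i.insertNth 0 r : Fin (n + 1) → ℝ) i x := funext fun x => ins_upd i x r
    rw [e]
    fun_prop
  · intro x hx
    exact Fin.insertNth_mem_Icc.2 ⟨hx, hr⟩

lemma box_lt (hU : IsOpen U) (hsm : ContDiffOn ℝ (⊤ : ℕ∞) h U) (hpos : ∀ x ∈ U, 0 < h x)
    (hAB : ∀ l, A l < B l) (hsub : Set.Icc A B ⊆ U) (hp : p ∈ Set.Ioo (A i) (B i)) (hb : Bal h i p A B)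
    (hα : ∀ x ∈ Set.Icc A B, logpd h i x < α) :
    ∫ x in (A i)..p, Real.exp (α * x) < ∫ x in p..(B i), Real.exp (α * x) := by
  by_contra! hW
  have hc : ContinuousOn h (Set.Icc A B) := hsm.continuousOn.mono hsub
  refine (lt_irrefl (∫ x in Set.Icc A (Function.update B i p), h x)) ?_
  nth_rewrite 1 [hb]
  refine fubini_lt (i := i) hc hAB
    (Set.Icc_subset_Icc (le_update_iff.2 ⟨hp.1.le, fun _ _ => le_rfl⟩) le_rfl)
    (Set.Icc_subset_Icc le_rfl (update_le_iff.2 ⟨hp.2.le, fun _ _ => le_rfl⟩))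
    (by simp +contextual) (by simp) (by simp) (by simp +contextual)
    (by simpa using hp.2.le) (by simpa using hp.1.le) ?_
  intro r hr
  simp only [Function.update_self]
  have hin : ∀ x ∈ Set.Icc (A i) (B i), i.insertNth x r ∈ Set.Icc A B :=
    fun x hx => Fin.insertNth_mem_Icc.2 ⟨hx, hr⟩
  have hd : ∀ x ∈ Set.Icc (A i) (B i), HasDerivAt (fun s => Real.log (h (i.insertNth s r)) - α * s)
      (logpd h i (i.insertNth x r) - α) x := fun x hx => fiber_deriv hU hsm hpos (hsub (hin x hx))
  refine fiber_anti hp (fiber_cont hc hr) (fun x hx => hpos _ (hsub (hin x hx))) ?_ hW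
  refine strictAntiOn_of_deriv_neg (convex_Icc _ _) (fun x hx => (hd x hx).continuousAt.continuousWithinAt) ?_
  intro x hx
  have hx' := interior_subset hx
  rw [(hd x hx').deriv]
  linarith [hα _ (hin x hx')]

lemma box_gt (hU : IsOpen U) (hsm : ContDiffOn ℝ (⊤ : ℕ∞) h U) (hpos : ∀ x ∈ U, 0 < h x)
    (hAB : ∀ l, A l < B l) (hsub : Set.Icc A B ⊆ U) (hp : p ∈ Set.Ioo (A i) (B i)) (hb : Bal h i p A B)
    (hα : ∀ x ∈ Set.Icc A B, α < logpd h i x) :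
    ∫ x in p..(B i), Real.exp (α * x) < ∫ x in (A i)..p, Real.exp (α * x) := by
  by_contra! hW
  have hc : ContinuousOn h (Set.Icc A B) := hsm.continuousOn.mono hsub
  refine (lt_irrefl (∫ x in Set.Icc A (Function.update B i p), h x)) ?_
  nth_rewrite 2 [hb]
  refine fubini_lt (i := i) hc hAB
    (Set.Icc_subset_Icc le_rfl (update_le_iff.2 ⟨hp.2.le, fun _ _ => le_rfl⟩))
    (Set.Icc_subset_Icc (le_update_iff.2 ⟨hp.1.le, fun _ _ => le_rfl⟩) le_rfl)
    (by simp) (by simp +contextual) (by simp +contextual) (by simp)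
    (by simpa using hp.1.le) (by simpa using hp.2.le) ?_
  intro r hr
  simp only [Function.update_self]
  have hin : ∀ x ∈ Set.Icc (A i) (B i), i.insertNth x r ∈ Set.Icc A B :=
    fun x hx => Fin.insertNth_mem_Icc.2 ⟨hx, hr⟩
  have hd : ∀ x ∈ Set.Icc (A i) (B i), HasDerivAt (fun s => Real.log (h (i.insertNth s r)) - α * s)
      (logpd h i (i.insertNth x r) - α) x := fun x hx => fiber_deriv hU hsm hpos (hsub (hin x hx))
  refine fiber_mono hp (fiber_cont hc hr) (fun x hx => hpos _ (hsub (hin x hx))) ?_ hW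
  refine strictMonoOn_of_deriv_pos (convex_Icc _ _) (fun x hx => (hd x hx).continuousAt.continuousWithinAt) ?_
  intro x hx
  have hx' := interior_subset hx
  rw [(hd x hx').deriv]
  linarith [hα _ (hin x hx')]

end fiberbox

lemma no_lt {n : ℕ} {I : Fin (n + 1) → Set ℝ} (hIopen : ∀ k, IsOpen (I k)) (hIconn : ∀ k, IsPreconnected (I k))
    {h : (Fin (n + 1) → ℝ) → ℝ} (hsm : ContDiffOn ℝ (⊤ : ℕ∞) h (Set.univ.pi I))
    (hpos : ∀ x ∈ Set.univ.pi I, 0 < h x) {i j : Fin (n + 1)} (hij : i ≠ j)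
    (hq : ∀ a b : Fin (n + 1) → ℝ, (∀ l, a l < b l) → Set.Icc a b ⊆ Set.univ.pi I → Quad h i j a b)
    {z z' : Fin (n + 1) → ℝ} (hz : z ∈ Set.univ.pi I) (hz' : z' ∈ Set.univ.pi I)
    (hzz : ∀ l, l ≠ j → z l = z' l) : ¬ logpd h i z < logpd h i z' := by
  intro hlt
  have hU : IsOpen (Set.univ.pi I) := isOpen_set_pi Set.finite_univ fun k _ => hIopen k
  have hne : z j ≠ z' j := by
    intro he
    have : z = z' := by
      funext l
      by_cases hl : l = j
      · subst hl; exact he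
      · exact hzz l hl
    subst this
    exact lt_irrefl _ hlt
  obtain ⟨α, hα1, hα2⟩ := exists_between hlt
  have hcont := (logpd_contDiffOn hU hsm hpos i).continuousOn
  have n1 : ∀ᶠ w in nhds z, w ∈ Set.univ.pi I ∧ logpd h i w < α :=
    (hU.eventually_mem hz).and
      ((hcont.continuousAt (hU.mem_nhds hz)).eventually_lt continuousAt_const hα1)
  have n2 : ∀ᶠ w in nhds z', α < logpd h i w :=
      (continuousAt_const.eventually_lt (hcont.continuousAt (hU.mem_nhds hz')) hα2)
  obtain ⟨ε1, hε1, b1⟩ := Metric.eventually_nhds_iff.1 n1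
  obtain ⟨ε2, hε2, b2⟩ := Metric.eventually_nhds_iff.1 n2
  set η := min ε1 ε2 / 2 with hη
  have hη0 : 0 < η := by positivity
  have hη1 : η < ε1 := by have := min_le_left ε1 ε2; have : 0 < min ε1 ε2 := by positivity
                          linarith
  have hη2 : η < ε2 := by have := min_le_right ε1 ε2; have : 0 < min ε1 ε2 := by positivity
                          linarith
  set A : Fin (n + 1) → ℝ := Function.update (fun l => z l - η) j (min (z j) (z' j)) with hA
  set B : Fin (n + 1) → ℝ := Function.update (fun l => z l + η) j (max (z j) (z' j)) with hB
  have hAj : A j = min (z j) (z' j) := by simp [hA]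
  have hBj : B j = max (z j) (z' j) := by simp [hB]
  have hAl : ∀ l, l ≠ j → A l = z l - η := fun l hl => by simp [hA, hl]
  have hBl : ∀ l, l ≠ j → B l = z l + η := fun l hl => by simp [hB, hl]
  have hAB : ∀ l, A l < B l := by
    intro l
    by_cases hl : l = j
    · subst hl; rw [hAj, hBj]; exact min_lt_max.2 hne
    · rw [hAl l hl, hBl l hl]; linarith
  have hsub : Set.Icc A B ⊆ Set.univ.pi I := by
    intro x hx l _
    by_cases hl : l = j
    · subst hl
      have hx1 := hx.1 l
      have hx2 := hx.2 l
      rw [hAj] at hx1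
      rw [hBj] at hx2
      exact (hIconn l).ordConnected.uIcc_subset (hz l trivial) (hz' l trivial) ⟨hx1, hx2⟩
    · have hx1 := hx.1 l
      have hx2 := hx.2 l
      rw [hAl l hl] at hx1
      rw [hBl l hl] at hx2
      have hd : dist (Function.update z l (x l)) z < ε1 := by
        refine lt_of_le_of_lt ((dist_pi_le_iff hη0.le).2 fun k => ?_) hη1
        by_cases hk : k = l
        · subst hk; simp only [Function.update_self, Real.dist_eq, abs_le]; constructor <;> linarith
        · simp [hk, hη0.le]
      simpa using (b1 hd).1 l trivial
  have hc : ContinuousOn h (Set.Icc A B) := hsm.continuousOn.mono hsub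
  have hneI : (Set.Icc A B).Nonempty := Set.nonempty_Icc.2 fun l => (hAB l).le
  obtain ⟨u, hu, hmin⟩ := isCompact_Icc.exists_isMinOn hneI hc
  obtain ⟨v, hv, hmax⟩ := isCompact_Icc.exists_isMaxOn hneI hc
  have hc0 := hpos u (hsub hu)
  have hC0 := hpos v (hsub hv)
  obtain ⟨p, _, hp, _, hbal, _⟩ := hq A B hAB hsub
  have hθ : h v / (h u + h v) < 1 := by rw [div_lt_one (by linarith)]; linarith
  obtain ⟨N, hN⟩ := exists_pow_lt_of_lt_one (div_pos hη0 (sub_pos.2 (hAB j))) hθ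
  rw [lt_div_iff₀ (sub_pos.2 (hAB j))] at hN
  have hmain : ∀ w : Fin (n + 1) → ℝ, w j ∈ Set.Icc (A j) (B j) → (∀ l, l ≠ j → w l = z l) →
      ∃ A' B' : Fin (n + 1) → ℝ, (∀ l, A' l < B' l) ∧ Set.Icc A' B' ⊆ Set.univ.pi I ∧ A' i = A i ∧ B' i = B i ∧
        Bal h i p A' B' ∧ ∀ x ∈ Set.Icc A' B', dist x w ≤ η := by
    intro w hw hwz
    obtain ⟨s, t, g1, g2, g3, g4, g5, g6, g7⟩ := shrink hij hAB hc hc0 hC0 (fun x hx => hmin hx)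
      (fun x hx => hmax hx) (fun a b hab hs => hq a b hab (hs.trans hsub)) hp hbal (w j) hw N
    refine ⟨Function.update A j s, Function.update B j t, ?_, ?_, by simp [hij], by simp [hij], g7, ?_⟩
    · intro l
      by_cases hl : l = j
      · subst hl; simpa using g5
      · simpa [hl] using hAB l
    · exact (Set.Icc_subset_Icc (le_update_iff.2 ⟨g1, fun _ _ => le_rfl⟩)
        (update_le_iff.2 ⟨g4, fun _ _ => le_rfl⟩)).trans hsub
    · intro x hx
      refine (dist_pi_le_iff hη0.le).2 fun l => ?_
      have hx1 := hx.1 l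
      have hx2 := hx.2 l
      rw [Real.dist_eq, abs_le]
      by_cases hl : l = j
      · subst hl
        simp only [Function.update_self] at hx1 hx2
        constructor <;> linarith
      · rw [Function.update_of_ne hl, hAl l hl] at hx1
        rw [Function.update_of_ne hl, hBl l hl] at hx2
        rw [hwz l hl]
        constructor <;> linarith
  obtain ⟨A1, B1, k1, k2, k3, k4, k5, k6⟩ := hmain z (by rw [hAj, hBj]; exact ⟨min_le_left _ _, le_max_left _ _⟩)
    (fun _ _ => rfl)
  obtain ⟨A2, B2, l1, l2, l3, l4, l5, l6⟩ := hmain z' (by rw [hAj, hBj]; exact ⟨min_le_right _ _, le_max_right _ _⟩)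
    (fun l hl => (hzz l hl).symm)
  have f1 := box_lt (α := α) hU hsm hpos k1 k2 (by rw [k3, k4]; exact hp) k5
    (fun x hx => (b1 (lt_of_le_of_lt (k6 x hx) hη1)).2)
  have f2 := box_gt (α := α) hU hsm hpos l1 l2 (by rw [l3, l4]; exact hp) l5
    (fun x hx => b2 (lt_of_le_of_lt (l6 x hx) hη2))
  rw [k3, k4] at f1
  rw [l3, l4] at f2
  exact lt_asymm f1 f2

lemma logpd2_zero {m : ℕ} {U : Set (Fin m → ℝ)} (hU : IsOpen U) {h : (Fin m → ℝ) → ℝ} {i j : Fin m}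
    (hconst : ∀ z ∈ U, ∀ z' ∈ U, (∀ l, l ≠ j → z l = z' l) → logpd h i z = logpd h i z')
    {x : Fin m → ℝ} (hx : x ∈ U) : logpd2 h i j x = 0 := by
  rw [logpd2_eq]
  by_cases hd : DifferentiableAt ℝ (logpd h i) x
  · have hxx : Function.update x j (x j) = x := by simp
    have h1 : HasDerivAt (fun t => logpd h i (Function.update x j t))
        (fderiv ℝ (logpd h i) x (Pi.single j 1)) (x j) := by
      have hd' : HasFDerivAt (logpd h i) (fderiv ℝ (logpd h i) x) (Function.update x j (x j)) := by
        rw [hxx]; exact hd.hasFDerivAt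
      exact hd'.comp_hasDerivAt (x j) (hasDerivAt_update x j (x j))
    have hct : ContinuousAt (fun t => Function.update x j t) (x j) := by fun_prop
    have hev : ∀ᶠ t in nhds (x j), Function.update x j t ∈ U :=
      hct.eventually_mem (by simpa using hU.mem_nhds hx)
    have h2 : (fun t => logpd h i (Function.update x j t)) =ᶠ[nhds (x j)] fun _ => logpd h i x := by
      filter_upwards [hev] with t ht
      exact hconst _ ht _ hx fun l hl => by simp [hl]
    exact h1.unique ((hasDerivAt_const (x j) (logpd h i x)).congr_of_eventuallyEq h2)
  · rw [fderiv_zero_of_not_differentiableAt hd]; simp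

/-! ### Product structure -/

lemma vec_sum {m : ℕ} (v : Fin m → ℝ) : v = ∑ l, v l • (Pi.single l (1:ℝ) : Fin m → ℝ) := by
  ext k; simp [Finset.sum_apply, Pi.single_apply]

lemma logpd_const {m : ℕ} {U : Set (Fin m → ℝ)} (hU : IsOpen U) (hconv : Convex ℝ U) {h : (Fin m → ℝ) → ℝ}
    (hsm : ContDiffOn ℝ (⊤ : ℕ∞) h U) (hpos : ∀ x ∈ U, 0 < h x) {i : Fin m}
    (hz : ∀ j, i ≠ j → ∀ x ∈ U, logpd2 h i j x = 0) {x y : Fin m → ℝ} (hx : x ∈ U) (hy : y ∈ U)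
    (hxy : x i = y i) : logpd h i x = logpd h i y := by
  have hmem : ∀ t ∈ Set.Icc (0:ℝ) 1, x + t • (y - x) ∈ U := fun t ht => hconv.add_smul_sub_mem hx hy ht
  have hder : ∀ t ∈ Set.Icc (0:ℝ) 1, HasDerivWithinAt (fun t : ℝ => logpd h i (x + t • (y - x))) 0
      (Set.Icc 0 1) t := by
    intro t ht
    have h1 : HasDerivAt (fun t : ℝ => x + t • (y - x)) (y - x) t := by
      simpa using ((hasDerivAt_id t).smul_const (y - x)).const_add x
    have h2 : DifferentiableAt ℝ (logpd h i) (x + t • (y - x)) :=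
      ((logpd_contDiffOn hU hsm hpos i).contDiffAt (hU.mem_nhds (hmem t ht))).differentiableAt (by simp)
    have h3 := h2.hasFDerivAt.comp_hasDerivAt t h1
    have h4 : fderiv ℝ (logpd h i) (x + t • (y - x)) (y - x) = 0 := by
      rw [vec_sum (y - x), map_sum, ← vec_sum]
      refine Finset.sum_eq_zero fun l _ => ?_
      rw [map_smul]
      by_cases hl : i = l
      · subst hl; simp [hxy]
      · have := hz l hl _ (hmem t ht)
        rw [logpd2_eq] at this
        rw [this, smul_zero]
    rw [h4] at h3
    exact h3.hasDerivWithinAt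
  have := (convex_Icc (0:ℝ) 1).norm_image_sub_le_of_norm_hasDerivWithin_le (C := 0) hder (by simp)
    (Set.left_mem_Icc.2 zero_le_one) (Set.right_mem_Icc.2 zero_le_one)
  simp at this
  linarith [sub_eq_zero.1 this]

lemma prod_formula {m : ℕ} {I : Fin m → Set ℝ} (hU : IsOpen (Set.univ.pi I)) (hconv : Convex ℝ (Set.univ.pi I))
    {h : (Fin m → ℝ) → ℝ}
    (hsm : ContDiffOn ℝ (⊤ : ℕ∞) h (Set.univ.pi I)) (hpos : ∀ x ∈ Set.univ.pi I, 0 < h x)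
    (hz : ∀ i j, i ≠ j → ∀ x ∈ Set.univ.pi I, logpd2 h i j x = 0) {a : Fin m → ℝ} (ha : a ∈ Set.univ.pi I) :
    ∃ c : ℝ, ∀ x ∈ Set.univ.pi I, h x = c * ∏ l, h (Function.update a l (x l)) := by
  set G : (Fin m → ℝ) → ℝ := fun x => Real.log (h x) - ∑ l, Real.log (h (Function.update a l (x l))) with hG
  have hup : ∀ x ∈ Set.univ.pi I, ∀ l, Function.update a l (x l) ∈ Set.univ.pi I := by
    intro x hx l k _
    by_cases hk : k = l
    · subst hk; simpa using hx k trivial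
    · simpa [hk] using ha k trivial
  have hd : ∀ x ∈ Set.univ.pi I, HasFDerivAt G (0 : (Fin m → ℝ) →L[ℝ] ℝ) x := by
    intro x hx
    have h1 := (log_diffAt hU hsm hpos hx).hasFDerivAt
    have h2 : ∀ l ∈ (Finset.univ : Finset (Fin m)), HasFDerivAt (fun x : Fin m → ℝ => Real.log (h (Function.update a l (x l))))
        (logpd h l (Function.update a l (x l)) • (ContinuousLinearMap.proj l : (Fin m → ℝ) →L[ℝ] ℝ)) x :=
      fun l _ => by
        have e1 := hasDerivAt_log_update hU hsm hpos (hup x hx l)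
        have e2 : HasFDerivAt (fun f : Fin m → ℝ => f l) (ContinuousLinearMap.proj l : (Fin m → ℝ) →L[ℝ] ℝ) x :=
          hasFDerivAt_apply l x
        exact HasDerivAt.comp_hasFDerivAt (f := fun f : Fin m → ℝ => f l) x e1 e2
    have h3 := h1.sub (HasFDerivAt.fun_sum h2)
    refine h3.congr_fderiv ?_
    ext v
    have h4 : fderiv ℝ (fun z => Real.log (h z)) x v = ∑ l, v l * logpd h l x := by
      conv_lhs => rw [vec_sum v]
      rw [map_sum]
      simp [logpd]
    simp only [ContinuousLinearMap.sub_apply, h4, ContinuousLinearMap.sum_apply]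
    simp only [ContinuousLinearMap.smul_apply, ContinuousLinearMap.proj_apply, smul_eq_mul,
      ContinuousLinearMap.zero_apply, sub_eq_zero]
    refine Finset.sum_congr rfl fun l _ => ?_
    rw [logpd_const hU hconv hsm hpos (hz l) hx (hup x hx l) (by simp), mul_comm]
  refine ⟨Real.exp (G a), fun x hx => ?_⟩
  have hGx : G x = G a := hU.is_const_of_fderiv_eq_zero hconv.isPreconnected
    (fun y hy => (hd y hy).differentiableAt.differentiableWithinAt) (fun y hy => (hd y hy).fderiv) hx ha
  rw [← hGx]
  have : ∏ l, h (Function.update a l (x l)) = Real.exp (∑ l, Real.log (h (Function.update a l (x l)))) := by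
    rw [Real.exp_sum]
    exact Finset.prod_congr rfl fun l _ => (Real.exp_log (hpos _ (hup x hx l))).symm
  rw [this, ← Real.exp_add, hG]
  simp only [sub_add_cancel]
  rw [Real.exp_log (hpos x hx)]

lemma box_prod {m : ℕ} {h : (Fin m → ℝ) → ℝ} {f : Fin m → ℝ → ℝ} {c : ℝ} {a b : Fin m → ℝ}
    (hf : ∀ x ∈ Set.Icc a b, h x = c * ∏ l, f l (x l)) :
    ∫ x in Set.Icc a b, h x = c * ∏ l, ∫ t in Set.Icc (a l) (b l), f l t := by
  rw [setIntegral_congr_fun measurableSet_Icc hf, integral_const_mul, ← Set.pi_univ_Icc, volume_pi,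
    Measure.restrict_pi_pi, integral_fintype_prod_eq_prod]

lemma median {f : ℝ → ℝ} {a b : ℝ} (hab : a < b) (hc : ContinuousOn f (Set.Icc a b))
    (hf : ∀ x ∈ Set.Icc a b, 0 < f x) :
    ∃ p ∈ Set.Ioo a b, ∫ x in Set.Icc a p, f x = ∫ x in Set.Icc p b, f x := by
  have hi : IntervalIntegrable f volume a b := hc.intervalIntegrable_of_Icc hab.le
  have hT : 0 < ∫ x in a..b, f x := intervalIntegral.intervalIntegral_pos_of_pos_on hi
    (fun x hx => hf x ⟨hx.1.le, hx.2.le⟩) hab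
  have hF : ContinuousOn (fun t => ∫ x in a..t, f x) (Set.Icc a b) := by
    have := intervalIntegral.continuousOn_primitive_interval (f := f) (a := a) (b := b) (μ := volume)
      (by rw [Set.uIcc_of_le hab.le]; exact hc.integrableOn_compact isCompact_Icc)
    rwa [Set.uIcc_of_le hab.le] at this
  obtain ⟨p, hp, hpe⟩ := intermediate_value_Ioo hab.le hF
    (show (∫ x in a..b, f x) / 2 ∈ _ from ⟨by simpa using hT, by simpa using hT⟩)
  refine ⟨p, hp, ?_⟩
  rw [integral_Icc_eq_integral_Ioc, integral_Icc_eq_integral_Ioc,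
    ← intervalIntegral.integral_of_le hp.1.le, ← intervalIntegral.integral_of_le hp.2.le]
  have := intervalIntegral.integral_add_adjacent_intervals
    ((hc.mono (Set.Icc_subset_Icc le_rfl hp.2.le)).intervalIntegrable_of_Icc (μ := volume) hp.1.le)
    ((hc.mono (Set.Icc_subset_Icc hp.1.le le_rfl)).intervalIntegrable_of_Icc (μ := volume) hp.2.le)
  simp only at hpe
  linarith

/-- On an open box `U`, the nonuniformity tensor of the codimension-1
web with density `h` vanishes iff the splitting condition holds: every closed box
`K ⊆ U` can, for each `k ∈ {1,…,m}`, be subdivided by one leaf of each of the first `k`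
coordinate-hyperplane foliations into `2^k` subboxes of equal `h`-volume. -/
theorem stmt19 {m : ℕ} (hm : 2 ≤ m)
    (I : Fin m → Set ℝ) (hIopen : ∀ k, IsOpen (I k)) (hIconn : ∀ k, IsPreconnected (I k))
    (h : (Fin m → ℝ) → ℝ)
    (hsm : ContDiffOn ℝ (⊤ : ℕ∞) h (Set.univ.pi I)) (hpos : ∀ x ∈ Set.univ.pi I, 0 < h x) :
    (∀ i j : Fin m, i ≠ j → ∀ x ∈ Set.univ.pi I, logpd2 h i j x = 0) ↔
    (∀ a b : Fin m → ℝ, (∀ l, a l < b l) → Set.Icc a b ⊆ Set.univ.pi I →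
      ∀ k : ℕ, 1 ≤ k → k ≤ m →
      ∃ p : Fin m → ℝ, (∀ l : Fin m, (l : ℕ) < k → p l ∈ Set.Ioo (a l) (b l)) ∧
        ∀ ε ε' : Fin m → Bool, splitVol h a b p k ε = splitVol h a b p k ε') := by

  have hU : IsOpen (Set.univ.pi I) := isOpen_set_pi Set.finite_univ fun k _ => hIopen k
  constructor
  · intro hz a b hab hsub k _ _
    have hconv : Convex ℝ (Set.univ.pi I) := convex_pi fun k _ => (hIconn k).ordConnected.convex
    have ha : a ∈ Set.univ.pi I := hsub ⟨le_rfl, fun l => (hab l).le⟩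
    obtain ⟨c, hcf⟩ := prod_formula hU hconv hsm hpos hz ha
    have hup : ∀ l, ∀ t ∈ Set.Icc (a l) (b l), Function.update a l t ∈ Set.univ.pi I := by
      intro l t ht
      exact hsub ⟨le_update_iff.2 ⟨ht.1, fun _ _ => le_rfl⟩, update_le_iff.2 ⟨ht.2, fun j _ => (hab j).le⟩⟩
    have hmed : ∀ l, ∃ p ∈ Set.Ioo (a l) (b l), ∫ x in Set.Icc (a l) p, h (Function.update a l x)
        = ∫ x in Set.Icc p (b l), h (Function.update a l x) := fun l =>
      median (hab l) (hsm.continuousOn.comp (by fun_prop) (hup l)) (fun t ht => hpos _ (hup l t ht))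
    choose p hp hpe using hmed
    refine ⟨p, fun l _ => hp l, ?_⟩
    have key : ∀ ε : Fin m → Bool, splitVol h a b p k ε = c * ∏ l : Fin m, if (l : ℕ) < k then
        ∫ x in Set.Icc (a l) (p l), h (Function.update a l x) else
        ∫ x in Set.Icc (a l) (b l), h (Function.update a l x) := by
      intro ε
      unfold splitVol
      rw [box_prod (f := fun l t => h (Function.update a l t)) (c := c)]
      · congr 1
        refine Finset.prod_congr rfl fun l _ => ?_
        by_cases hl : (l : ℕ) < k
        · cases hε : ε l
          · simp [hl]
          · simp [hl, hpe l]
        · simp [hl]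
      · intro x hx
        refine hcf x (hsub ⟨fun l => le_trans ?_ (hx.1 l), fun l => le_trans (hx.2 l) ?_⟩)
        · dsimp only; split_ifs; exacts [(hp l).1.le, le_rfl]
        · dsimp only; split_ifs; exacts [(hp l).2.le, le_rfl]
    intro ε ε'
    rw [key, key]
  · intro hb i j hij x hx
    obtain ⟨n, rfl⟩ : ∃ n, m = n + 1 := ⟨m - 1, by omega⟩
    have hq : ∀ a b : Fin (n + 1) → ℝ, (∀ l, a l < b l) → Set.Icc a b ⊆ Set.univ.pi I → Quad h i j a b := by
      intro a b hab hsub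
      obtain ⟨p, hp, hs⟩ := hb a b hab hsub (n + 1) (by omega) le_rfl
      exact quad_of_split hij (hsm.continuousOn.mono hsub) (fun l => hp l l.2) hs
    refine logpd2_zero hU ?_ hx
    intro z hz z' hz' hzz
    exact le_antisymm (not_lt.1 (no_lt hIopen hIconn hsm hpos hij hq hz' hz fun l hl => (hzz l hl).symm))
      (not_lt.1 (no_lt hIopen hIconn hsm hpos hij hq hz hz' hzz))
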